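/- Let m > 2 be a prime number, s = 4 and q = p ≡ 1 (mod 4). Then P_m(0,4,h) = (1/4)·(p^{p−2} − 1) if m = p, and P_m(0,4,h) = (1/(4m))·(p^{m−1} − 1) if m ≠ p. For a ≠ 0: if m = p then P_p(a,4,h) = (1/(4p))·( p^{p−1} + (−1)^h·( p^{(p−1)/2}·ρ(a) + 2·p^{(p−1)/4}·Re(π_4^{(p−1)/2}·χ_4(a)·i^h) ) ); if m ≠ p then P_m(a,4,h) = (1/(4m))·( p^{m−1} − 1 + (−1)^h·( ρ(a)·( p^{(m−1)/2} − ρ(m) ) + 2·Re R_m ) ), where R_m = p^{(m−1)/4}·π_4^{(m−1)/2}·χ_4(a)·i^h − χ_4(m³·a)·i^h if m ≡ 1 (mod 4), and R_m = (−1)^f·p^{(m−3)/4}·π_4^{(m+1)/2}·χ̄_4(a)·i^h − χ_4(m³·a)·i^{3h} if m ≡ 3 (mod 4). -/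

import Mathlib

noncomputable section

open Complex Polynomial Classical

/-- `P_m(a,s,h)`: the number of monic irreducible `f = x^m − a x^{m-1} + ⋯ + (−1)^m b`
of degree `m` over `F` with `b ∈ g^h·⟨g^s⟩`. -/
def PP (F : Type*) [Field F] [Fintype F] (g : F) (m s h : ℕ) (a : F) : ℕ :=
  Nat.card {f : Polynomial F // f.Monic ∧ f.natDegree = m ∧ Irreducible f ∧
    f.coeff (m - 1) = -a ∧ ∃ k : ℕ, (-1 : F) ^ m * f.coeff 0 = g ^ (h + s * k)}

/-!
Fix a multiplicative character `χ` and an additive character `ψ` of `F`. On the monic polynomials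
`f = X^n - a X^(n-1) + ⋯ + (-1)^n b` the weight `χ(b) ψ(a)` is completely multiplicative, and by
orthogonality its `L`-function is `1 + G(χ, ψ) T` unless `χ` and `ψ` are both trivial. The
logarithmic derivative of this linear polynomial gives the sum of the weight over the irreducible
polynomials of prime degree `m`; summing over `ψ` prescribes the trace, and summing over the powers
of `χ₄` prescribes the coset of the norm.

The Gauss sums left over are powers of `G(χ₄)^4 = q J(χ₄, χ₄)^2`, so only the square of the Jacobi
sum matters. For `q = p`, both `J(χ₄, χ₄)` and `a₄ + b₄ i` are Gaussian integers of norm `p` with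
odd real part, lying in the same prime above `p`, so they agree up to sign.
-/

section Newton

variable {F : Type*} [Field F] {R : Type*} [CommRing R]

/-- A weight on polynomials which is completely multiplicative on the monic ones. -/
structure IsMonicMultiplicative (w : F[X] → R) : Prop where
  map_one : w 1 = 1
  map_mul : ∀ f g : F[X], f.Monic → g.Monic → w (f * g) = w f * w g

lemma IsMonicMultiplicative.map_pow {w : F[X] → R} (hw : IsMonicMultiplicative w) {f : F[X]}
    (hf : f.Monic) (k : ℕ) : w (f ^ k) = w f ^ k := by
  induction k with
  | zero => rw [pow_zero, pow_zero, hw.map_one]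
  | succ k ih => rw [pow_succ, hw.map_mul _ _ (hf.pow k) hf, ih, pow_succ]

open UniqueFactorizationMonoid in
lemma pow_dvd_iff_le_count_normalizedFactors {f P : F[X]} (hf : f ≠ 0) (hP : Irreducible P)
    (hmonic : P.Monic) {k : ℕ} : P ^ k ∣ f ↔ k ≤ (normalizedFactors f).count P := by
  rw [pow_dvd_iff_le_emultiplicity, emultiplicity_eq_count_normalizedFactors hP hf,
    hmonic.normalize_eq_self, Nat.cast_le]

open UniqueFactorizationMonoid in
lemma sum_sum_Icc_count_natDegree {f : F[X]} (hf : f.Monic) :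
    ∑ P ∈ (normalizedFactors f).toFinset,
      ∑ _k ∈ Finset.Icc 1 ((normalizedFactors f).count P), P.natDegree = f.natDegree := by
  have hprod : (normalizedFactors f).prod = f := by
    simpa only [hf.leadingCoeff, C_1, one_mul] using leadingCoeff_mul_prod_normalizedFactors f
  conv_rhs => rw [← hprod, natDegree_multiset_prod_of_monic _ fun P hP =>
    ((Polynomial.mem_normalizedFactors_iff hf.ne_zero).1 hP).2.1, Finset.sum_multiset_map_count]
  simp only [Finset.sum_const, Nat.card_Icc, Nat.add_sub_cancel]

open UniqueFactorizationMonoid in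
lemma mem_sigma_normalizedFactors_iff {f : F[X]} (hf : f.Monic) {P : F[X]} {k : ℕ} :
    (⟨P, k⟩ : Σ _ : F[X], ℕ) ∈ (normalizedFactors f).toFinset.sigma
        (fun P => Finset.Icc 1 ((normalizedFactors f).count P)) ↔
      P.Monic ∧ Irreducible P ∧ k ≠ 0 ∧ P ^ k ∣ f := by
  rw [Finset.mem_sigma, Multiset.mem_toFinset, Finset.mem_Icc, Nat.one_le_iff_ne_zero,
    Polynomial.mem_normalizedFactors_iff hf.ne_zero]
  constructor
  · rintro ⟨⟨hirr, hP, -⟩, hk, hle⟩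
    exact ⟨hP, hirr, hk, (pow_dvd_iff_le_count_normalizedFactors hf.ne_zero hirr hP).2 hle⟩
  · rintro ⟨hP, hirr, hk, hdvd⟩
    exact ⟨⟨hirr, hP, (dvd_pow_self P hk).trans hdvd⟩, hk,
      (pow_dvd_iff_le_count_normalizedFactors hf.ne_zero hirr hP).1 hdvd⟩

/-- The bijection sending a monic polynomial of degree `n` to its `n` coefficients below the
leading one. -/
def lowerCoeffEquiv (F : Type*) [Field F] (n : ℕ) :
    {f : F[X] // f.Monic ∧ f.natDegree = n} ≃ (Fin n → F) :=
  (monicEquivDegreeLT n).trans (degreeLTEquiv F n).toEquiv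

lemma lowerCoeffEquiv_apply {n : ℕ} (f : {f : F[X] // f.Monic ∧ f.natDegree = n}) (i : Fin n) :
    lowerCoeffEquiv F n f i = f.1.coeff i :=
  eraseLead_coeff_of_ne _ (f.2.2.symm ▸ i.2.ne)

variable [Fintype F]

/-- The monic polynomials of degree `n`. -/
def monicsOfDegree (F : Type*) [Field F] [Fintype F] (n : ℕ) : Finset F[X] :=
  Finset.univ.map ((lowerCoeffEquiv F n).symm.toEmbedding.trans (Function.Embedding.subtype _))

lemma mem_monicsOfDegree {n : ℕ} {f : F[X]} :
    f ∈ monicsOfDegree F n ↔ f.Monic ∧ f.natDegree = n := by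
  constructor
  · intro h
    obtain ⟨v, -, rfl⟩ := Finset.mem_map.1 h
    exact ((lowerCoeffEquiv F n).symm v).2
  · intro h
    exact Finset.mem_map.2 ⟨lowerCoeffEquiv F n ⟨f, h⟩, Finset.mem_univ _,
      congrArg Subtype.val ((lowerCoeffEquiv F n).symm_apply_apply _)⟩

/-- The monic irreducible polynomials of degree `n`. -/
def monicIrreducibles (F : Type*) [Field F] [Fintype F] (n : ℕ) : Finset F[X] :=
  (monicsOfDegree F n).filter Irreducible

lemma mem_monicIrreducibles {n : ℕ} {P : F[X]} :
    P ∈ monicIrreducibles F n ↔ P.Monic ∧ P.natDegree = n ∧ Irreducible P := by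
  simp only [monicIrreducibles, Finset.mem_filter, mem_monicsOfDegree, and_assoc]

/-- The `n`-th coefficient of the `L`-function `∑ w(f) T ^ deg f`, over monic `f`, of a
weight `w`. -/
def monicSum (w : F[X] → R) (n : ℕ) : R := ∑ f ∈ monicsOfDegree F n, w f

/-- The sum of `deg P * w(P) ^ k` over the prime powers `P ^ k` of degree `n`, that is the
`n`-th coefficient of the logarithmic derivative of the `L`-function of `w`. -/
def primePowerSum (w : F[X] → R) (n : ℕ) : R :=
  ∑ dk ∈ n.divisorsAntidiagonal, (dk.1 : R) * ∑ P ∈ monicIrreducibles F dk.1, w P ^ dk.2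

lemma monicSum_zero {w : F[X] → R} (hw : IsMonicMultiplicative w) : monicSum w 0 = 1 := by
  have h : monicsOfDegree F 0 = {1} := by
    ext f
    rw [mem_monicsOfDegree, Finset.mem_singleton]
    exact ⟨fun h => h.1.natDegree_eq_zero.1 h.2, by rintro rfl; exact ⟨monic_one, natDegree_one⟩⟩
  rw [monicSum, h, Finset.sum_singleton, hw.map_one]

lemma sum_monicIrreducibles_one (φ : F[X] → R) :
    ∑ P ∈ monicIrreducibles F 1, φ P = ∑ x : F, φ (X - C x) := by
  refine (Finset.sum_bij (fun x _ => X - C x) ?_ ?_ ?_ fun _ _ => rfl).symm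
  · exact fun x _ => mem_monicIrreducibles.2
      ⟨monic_X_sub_C x, natDegree_X_sub_C x, irreducible_X_sub_C x⟩
  · exact fun x _ y _ h => C_injective (sub_right_injective h)
  · intro f hf
    obtain ⟨hmonic, hdeg, -⟩ := mem_monicIrreducibles.1 hf
    exact ⟨-f.coeff 0, Finset.mem_univ _, by rw [C_neg, sub_neg_eq_add, ← hmonic.eq_X_add_C hdeg]⟩

lemma monicsOfDegree_one : monicsOfDegree F 1 = monicIrreducibles F 1 := by
  ext f
  rw [mem_monicsOfDegree, mem_monicIrreducibles]
  exact ⟨fun h => ⟨h.1, h.2, irreducible_of_degree_eq_one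
    ((degree_eq_iff_natDegree_eq_of_pos one_pos).2 h.2)⟩, fun h => ⟨h.1, h.2.1⟩⟩

lemma monicSum_one (w : F[X] → R) : monicSum w 1 = ∑ x : F, w (X - C x) := by
  rw [monicSum, monicsOfDegree_one, sum_monicIrreducibles_one]

lemma primePowerSum_prime (w : F[X] → R) {m : ℕ} (hm : m.Prime) :
    primePowerSum w m =
      (m : R) * ∑ P ∈ monicIrreducibles F m, w P + ∑ x : F, w (X - C x) ^ m := by
  rw [primePowerSum, Nat.sum_divisorsAntidiagonal
    (f := fun d k => (d : R) * ∑ P ∈ monicIrreducibles F d, w P ^ k), hm.sum_divisors,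
    Nat.div_self hm.pos, Nat.div_one]
  simp only [Nat.cast_one, one_mul, pow_one, sum_monicIrreducibles_one fun P => w P ^ m]

lemma sum_monicsOfDegree_filter_dvd {w : F[X] → R} (hw : IsMonicMultiplicative w) {Q : F[X]}
    (hQ : Q.Monic) (n : ℕ) :
    ∑ f ∈ monicsOfDegree F (Q.natDegree + n) with Q ∣ f, w f = w Q * monicSum w n := by
  rw [monicSum, Finset.mul_sum]
  refine (Finset.sum_bij (fun g _ => Q * g) ?_ ?_ ?_ ?_).symm
  · intro g hg
    obtain ⟨hmonic, hdeg⟩ := mem_monicsOfDegree.1 hg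
    exact Finset.mem_filter.2 ⟨mem_monicsOfDegree.2
      ⟨hQ.mul hmonic, by rw [hQ.natDegree_mul hmonic, hdeg]⟩, dvd_mul_right Q g⟩
  · exact fun g _ g' _ h => mul_left_cancel₀ hQ.ne_zero h
  · intro f hf
    obtain ⟨hf, g, rfl⟩ := Finset.mem_filter.1 hf
    obtain ⟨hmonic, hdeg⟩ := mem_monicsOfDegree.1 hf
    have hg : g.Monic := hQ.of_mul_monic_left hmonic
    rw [hQ.natDegree_mul hg, Nat.add_left_cancel_iff] at hdeg
    exact ⟨g, mem_monicsOfDegree.2 ⟨hg, hdeg⟩, rfl⟩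
  · exact fun g hg => (hw.map_mul Q g hQ (mem_monicsOfDegree.1 hg).1).symm

open UniqueFactorizationMonoid in
lemma sum_natDegree_primePow_dvd {n : ℕ} {f : F[X]} (hf : f ∈ monicsOfDegree F n) :
    ∑ ij ∈ Finset.HasAntidiagonal.antidiagonal n, ∑ dk ∈ ij.1.divisorsAntidiagonal,
      ∑ P ∈ monicIrreducibles F dk.1 with P ^ dk.2 ∣ f, dk.1 = n := by
  obtain ⟨hmonic, hdeg⟩ := mem_monicsOfDegree.1 hf
  conv_rhs => rw [← hdeg, ← sum_sum_Icc_count_natDegree hmonic]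
  rw [Finset.Nat.sum_antidiagonal_eq_sum_range_succ_mk]
  simp only [Finset.sum_sigma']
  refine Finset.sum_bij' (fun y _ => ⟨y.2.2, y.2.1.2⟩)
    (fun x _ => ⟨x.1.natDegree * x.2, ⟨(x.1.natDegree, x.2), x.1⟩⟩) ?_ ?_ ?_ ?_ ?_
  · rintro ⟨j, ⟨d, k⟩, P⟩ h
    simp only [Finset.mem_sigma, Finset.mem_filter, Nat.mem_divisorsAntidiagonal,
      mem_monicIrreducibles] at h
    obtain ⟨-, ⟨rfl, hdk⟩, ⟨hP, -, hirr⟩, hdvd⟩ := h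
    exact (mem_sigma_normalizedFactors_iff hmonic).2 ⟨hP, hirr, right_ne_zero_of_mul hdk, hdvd⟩
  · rintro ⟨P, k⟩ h
    obtain ⟨hP, hirr, hk, hdvd⟩ := (mem_sigma_normalizedFactors_iff hmonic).1 h
    have hdk : P.natDegree * k ≤ n := by
      rw [← hdeg, mul_comm, ← natDegree_pow]
      exact natDegree_le_of_dvd hdvd hmonic.ne_zero
    simp only [Finset.mem_sigma, Finset.mem_range, Finset.mem_filter,
      Nat.mem_divisorsAntidiagonal, mem_monicIrreducibles]
    exact ⟨Nat.lt_succ_of_le hdk, ⟨trivial, mul_ne_zero hirr.natDegree_pos.ne' hk⟩,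
      ⟨hP, trivial, hirr⟩, hdvd⟩
  · rintro ⟨j, ⟨d, k⟩, P⟩ h
    simp only [Finset.mem_sigma, Finset.mem_filter, Nat.mem_divisorsAntidiagonal,
      mem_monicIrreducibles] at h
    obtain ⟨-, ⟨rfl, -⟩, ⟨-, rfl, -⟩, -⟩ := h
    rfl
  · exact fun _ _ => rfl
  · rintro ⟨j, ⟨d, k⟩, P⟩ h
    simp only [Finset.mem_sigma, Finset.mem_filter, mem_monicIrreducibles] at h
    exact h.2.2.1.2.1.symm

/-- Newton's identity between the coefficients of an `L`-function and those of its logarithmic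
derivative. -/
theorem natCast_mul_monicSum {w : F[X] → R} (hw : IsMonicMultiplicative w) (n : ℕ) :
    (n : R) * monicSum w n =
      ∑ ij ∈ Finset.HasAntidiagonal.antidiagonal n, primePowerSum w ij.1 * monicSum w ij.2 := by
  have hterm : ∀ ij ∈ Finset.HasAntidiagonal.antidiagonal n,
      primePowerSum w ij.1 * monicSum w ij.2 =
        ∑ f ∈ monicsOfDegree F n, ∑ dk ∈ ij.1.divisorsAntidiagonal,
          ∑ P ∈ monicIrreducibles F dk.1 with P ^ dk.2 ∣ f, (dk.1 : R) * w f := by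
    rintro ⟨i, j⟩ hij
    obtain rfl := Finset.HasAntidiagonal.mem_antidiagonal.1 hij
    rw [primePowerSum, Finset.sum_mul, Finset.sum_comm]
    refine Finset.sum_congr rfl fun ⟨d, k⟩ hdk => ?_
    simp only [Finset.sum_filter]
    rw [Finset.mul_sum, Finset.sum_mul, Finset.sum_comm]
    refine Finset.sum_congr rfl fun P hP => ?_
    obtain ⟨hP, hPdeg, -⟩ := mem_monicIrreducibles.1 hP
    have hdeg : (P ^ k).natDegree = i := by
      rw [natDegree_pow, hPdeg, mul_comm, (Nat.mem_divisorsAntidiagonal.1 hdk).1]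
    rw [mul_assoc, ← hw.map_pow hP, ← sum_monicsOfDegree_filter_dvd hw (hP.pow k), hdeg,
      Finset.mul_sum, Finset.sum_filter]
  rw [Finset.sum_congr rfl hterm, Finset.sum_comm, monicSum, Finset.mul_sum]
  refine Finset.sum_congr rfl fun f hf => ?_
  conv_lhs => rw [← sum_natDegree_primePow_dvd hf]
  push_cast
  simp only [Finset.sum_mul]

/-- If the `L`-function is `1 + ℓ T + t ℓ T ^ 2 + t ^ 2 ℓ T ^ 3 + ⋯ = (1 - (t - ℓ) T) / (1 - t T)`,
its logarithmic derivative can be read off. -/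
theorem primePowerSum_of_monicSum_eq {w : F[X] → R} (hw : IsMonicMultiplicative w) {t : R}
    (ht : ∀ n, monicSum w (n + 1) = t ^ n * monicSum w 1) (n : ℕ) :
    primePowerSum w n = t ^ n - (t - monicSum w 1) ^ n := by
  obtain ⟨T, hT⟩ : ∃ T : ℕ → R, ∀ n, T n =
    ∑ ij ∈ Finset.HasAntidiagonal.antidiagonal n, primePowerSum w ij.1 * t ^ ij.2 :=
    ⟨_, fun _ => rfl⟩
  have newton (n : ℕ) :
      ((n : R) + 1) * (t ^ n * monicSum w 1) = primePowerSum w (n + 1) + T n * monicSum w 1 := by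
    rw [← ht, ← Nat.cast_add_one, natCast_mul_monicSum hw, Finset.Nat.sum_antidiagonal_succ',
      monicSum_zero hw, mul_one, hT, Finset.sum_mul]
    exact congrArg _ (Finset.sum_congr rfl fun ij _ => by rw [ht, mul_assoc])
  have T_succ (n : ℕ) : T (n + 1) = primePowerSum w (n + 1) + t * T n := by
    rw [hT, hT, Finset.Nat.sum_antidiagonal_succ', Finset.mul_sum, pow_zero, mul_one]
    simp only [pow_succ, mul_comm t, mul_assoc]
  have hzero : primePowerSum w 0 = 0 := by
    rw [primePowerSum, Nat.divisorsAntidiagonal_zero, Finset.sum_empty]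
  have hrec (n : ℕ) : primePowerSum w (n + 1) =
      t ^ n * monicSum w 1 + (t - monicSum w 1) * primePowerSum w n := by
    cases n with
    | zero =>
      have hT0 : T 0 = 0 := by
        rw [hT, Finset.Nat.antidiagonal_zero, Finset.sum_singleton, hzero, zero_mul]
      linear_combination -newton 0 - monicSum w 1 * hT0 - (t - monicSum w 1) * hzero
    | succ n =>
      have h := newton (n + 1)
      push_cast at h
      linear_combination t * newton n - h - monicSum w 1 * T_succ n
  induction n with
  | zero => rw [hzero, pow_zero, pow_zero, sub_self]
  | succ n ih => rw [hrec, ih]; ring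

end Newton

section CharacterWeight

variable {F : Type*} [Field F] {R : Type*} [CommRing R]

/-- The weight `f ↦ χ(b) ψ(a)` on the monic polynomials `f = X^n - a X^(n-1) + ⋯ + (-1)^n b`. -/
def charWeight (χ : MulChar F R) (ψ : AddChar F R) (f : F[X]) : R :=
  χ ((-1) ^ f.natDegree * f.coeff 0) * ψ (-f.nextCoeff)

lemma isMonicMultiplicative_charWeight (χ : MulChar F R) (ψ : AddChar F R) :
    IsMonicMultiplicative (charWeight χ ψ) where
  map_one := by simp [charWeight, nextCoeff]
  map_mul f g hf hg := by
    rw [charWeight, charWeight, charWeight, hf.natDegree_mul hg, mul_coeff_zero,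
      hf.nextCoeff_mul hg, pow_add, mul_mul_mul_comm, map_mul, neg_add, AddChar.map_add_eq_mul,
      mul_mul_mul_comm]

lemma charWeight_X_sub_C (χ : MulChar F R) (ψ : AddChar F R) (x : F) :
    charWeight χ ψ (X - C x) = χ x * ψ x := by
  simp [charWeight, nextCoeff_X_sub_C]

variable [Fintype F]

lemma monicSum_charWeight_one (χ : MulChar F R) (ψ : AddChar F R) :
    monicSum (charWeight χ ψ) 1 = gaussSum χ ψ := by
  simp only [monicSum_one, charWeight_X_sub_C, gaussSum]

lemma sum_apply_zero_mul_apply_last {α : Type*} [Fintype α] (φ φ' : α → R) (k : ℕ) :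
    ∑ v : Fin (k + 2) → α, φ (v 0) * φ' (v (Fin.last (k + 1))) =
      (∑ x, φ x) * (Fintype.card α : R) ^ k * ∑ x, φ' x := by
  have h := Finset.prod_univ_sum (fun _ : Fin (k + 2) => (Finset.univ : Finset α))
    (Fin.cons φ (Fin.snoc (fun _ _ => 1) φ') : Fin (k + 2) → α → R)
  rw [Fintype.piFinset_univ] at h
  simp only [Fin.prod_univ_succ (n := k + 1), Fin.prod_univ_castSucc (n := k), Fin.cons_zero,
    Fin.cons_succ, Fin.snoc_castSucc, Fin.snoc_last, Fin.succ_last, Finset.prod_const_one, one_mul,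
    Finset.sum_const, Finset.prod_const, Finset.card_univ, Fintype.card_fin, nsmul_one] at h
  rw [← h, mul_assoc]

lemma sum_monicsOfDegree_coeff_zero_nextCoeff (φ φ' : F → R) (k : ℕ) :
    ∑ f ∈ monicsOfDegree F (k + 2), φ (f.coeff 0) * φ' f.nextCoeff =
      (∑ x, φ x) * (Fintype.card F : R) ^ k * ∑ x, φ' x := by
  rw [← sum_apply_zero_mul_apply_last, monicsOfDegree, Finset.sum_map]
  refine Finset.sum_congr rfl fun v _ => ?_
  obtain ⟨f, rfl⟩ := (lowerCoeffEquiv F (k + 2)).surjective v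
  simp only [Function.Embedding.trans_apply, Equiv.coe_toEmbedding, Equiv.symm_apply_apply,
    Function.Embedding.subtype_apply, lowerCoeffEquiv_apply, Fin.val_zero, Fin.val_last]
  rw [nextCoeff_of_natDegree_pos (by omega), f.2.2]
  rfl

lemma monicSum_charWeight_add_two (χ : MulChar F R) (ψ : AddChar F R) (k : ℕ) :
    monicSum (charWeight χ ψ) (k + 2) =
      (∑ x, χ x) * (Fintype.card F : R) ^ k * ∑ x, ψ x := by
  have hne : (-1 : F) ^ (k + 2) ≠ 0 := pow_ne_zero _ (neg_ne_zero.2 one_ne_zero)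
  rw [← Equiv.sum_comp (Equiv.mulLeft₀ ((-1 : F) ^ (k + 2)) hne) χ,
    ← Equiv.sum_comp (Equiv.neg F) ψ, ← sum_monicsOfDegree_coeff_zero_nextCoeff, monicSum]
  refine Finset.sum_congr rfl fun f hf => ?_
  rw [charWeight, (mem_monicsOfDegree.1 hf).2]
  rfl

theorem primePowerSum_charWeight_one_one (n : ℕ) :
    primePowerSum (charWeight (1 : MulChar F R) (1 : AddChar F R)) n =
      (Fintype.card F : R) ^ n - 1 := by
  have hG : monicSum (charWeight (1 : MulChar F R) (1 : AddChar F R)) 1 = Fintype.card F - 1 := by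
    rw [monicSum_charWeight_one, gaussSum_one_one, Nat.card_eq_fintype_card, Fintype.card_units,
      Nat.cast_pred Fintype.card_pos]
  have h := primePowerSum_of_monicSum_eq
    (isMonicMultiplicative_charWeight (1 : MulChar F R) (1 : AddChar F R))
    (t := (Fintype.card F : R)) ?_ n
  · rw [h, hG, sub_sub_cancel, one_pow]
  · rintro (_ | k)
    · rw [pow_zero, one_mul]
    · rw [monicSum_charWeight_add_two, hG, MulChar.sum_one_eq_card_units, Fintype.card_units,
        Nat.cast_pred Fintype.card_pos]
      simp only [AddChar.one_apply, Finset.sum_const, Finset.card_univ, nsmul_one]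
      ring

variable [IsDomain R]

/-- The Hasse–Davenport relation, in the form of an `L`-function which is `1 + G(χ, ψ) T`. -/
theorem primePowerSum_charWeight {χ : MulChar F R} {ψ : AddChar F R} (h : χ ≠ 1 ∨ ψ ≠ 1) {n : ℕ}
    (hn : n ≠ 0) : primePowerSum (charWeight χ ψ) n = -(-gaussSum χ ψ) ^ n := by
  have hvanish (k : ℕ) : monicSum (charWeight χ ψ) (k + 2) = 0 := by
    rw [monicSum_charWeight_add_two]
    rcases h with hχ | hψ
    · rw [MulChar.sum_eq_zero_of_ne_one hχ, zero_mul, zero_mul]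
    · rw [AddChar.sum_eq_zero_of_ne_one hψ, mul_zero]
  have h := primePowerSum_of_monicSum_eq (isMonicMultiplicative_charWeight χ ψ) (t := 0) ?_ n
  · rw [h, zero_pow hn, zero_sub, zero_sub, monicSum_charWeight_one]
  · rintro (_ | k)
    · rw [pow_zero, one_mul]
    · rw [hvanish, zero_pow k.succ_ne_zero, zero_mul]

end CharacterWeight

section PrescribedTrace

variable {F : Type*} [Field F] [Fintype F] {R : Type*} [CommRing R]

/-- The sum of `χ(b)` over the monic irreducible polynomials `X^m - a X^(m-1) + ⋯ + (-1)^m b`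
with a given coefficient `a`. -/
def irreducibleCharSum (χ : MulChar F R) (m : ℕ) (a : F) : R :=
  ∑ P ∈ monicIrreducibles F m with -P.nextCoeff = a, χ ((-1) ^ m * P.coeff 0)

lemma sum_filter_natCast_mul_eq_of_ne_zero (φ : F → R) {m : ℕ} (hm : (m : F) ≠ 0) (a : F) :
    ∑ x : F with m * x = a, φ x = φ (a / m) := by
  have h : (Finset.univ.filter fun x : F => m * x = a) = {a / m} := by
    ext x
    rw [Finset.mem_filter_univ, Finset.mem_singleton, eq_div_iff hm, mul_comm]
  rw [h, Finset.sum_singleton]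

lemma sum_filter_natCast_mul_eq_of_eq_zero (φ : F → R) {m : ℕ} (hm : (m : F) = 0) (a : F) :
    ∑ x : F with m * x = a, φ x = if a = 0 then ∑ x, φ x else 0 := by
  simp only [hm, zero_mul, Finset.sum_filter, eq_comm (a := (0 : F))]
  split_ifs <;> simp

variable [IsDomain R]

lemma sum_neg_mul_mulShift {ψ : AddChar F R} (hψ : ψ.IsPrimitive) (a b : F) :
    ∑ c, ψ (-(c * a)) * ψ.mulShift c b = if b = a then (Fintype.card F : R) else 0 := by
  have h (c : F) : ψ (-(c * a)) * ψ.mulShift c b = ψ (c * (b - a)) := by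
    rw [AddChar.mulShift_apply, ← AddChar.map_add_eq_mul, mul_sub, neg_add_eq_sub]
  simp only [h, AddChar.sum_mulShift _ hψ, sub_eq_zero, Nat.cast_ite, Nat.cast_zero]

lemma sum_neg_mul_sum_mul_mulShift {ψ : AddChar F R} (hψ : ψ.IsPrimitive) {ι : Type*}
    (s : Finset ι) (φ : ι → R) (b : ι → F) (a : F) :
    ∑ c, ψ (-(c * a)) * ∑ i ∈ s, φ i * ψ.mulShift c (b i) =
      Fintype.card F * ∑ i ∈ s with b i = a, φ i := by
  simp only [Finset.mul_sum, mul_left_comm (ψ _)]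
  rw [Finset.sum_comm]
  simp only [← Finset.mul_sum, sum_neg_mul_mulShift hψ, mul_ite, mul_zero, Finset.sum_filter,
    mul_comm (Fintype.card F : R)]

/-- Orthogonality of the additive characters isolates the trace `a`. -/
theorem card_mul_irreducibleCharSum_add (χ : MulChar F R) {ψ : AddChar F R}
    (hψ : ψ.IsPrimitive) {m : ℕ} (hm : m.Prime) (a : F) :
    (Fintype.card F : R) * (m * irreducibleCharSum χ m a + ∑ x : F with m * x = a, (χ ^ m) x) =
      ∑ c, ψ (-(c * a)) * primePowerSum (charWeight χ (ψ.mulShift c)) m := by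
  have hirr (c : F) : ∑ P ∈ monicIrreducibles F m, charWeight χ (ψ.mulShift c) P =
      ∑ P ∈ monicIrreducibles F m, χ ((-1) ^ m * P.coeff 0) * ψ.mulShift c (-P.nextCoeff) :=
    Finset.sum_congr rfl fun P hP => by rw [charWeight, (mem_monicIrreducibles.1 hP).2.1]
  have hlin (c x : F) :
      charWeight χ (ψ.mulShift c) (X - C x) ^ m = (χ ^ m) x * ψ.mulShift c (m * x) := by
    rw [charWeight_X_sub_C, mul_pow, ← AddChar.map_nsmul_eq_pow, nsmul_eq_mul,
      MulChar.pow_apply' _ hm.ne_zero]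
  simp only [primePowerSum_prime _ hm, hirr, hlin, mul_add, Finset.sum_add_distrib,
    sum_neg_mul_sum_mul_mulShift hψ, mul_left_comm (ψ _) (m : R)]
  rw [← Finset.mul_sum, sum_neg_mul_sum_mul_mulShift hψ, irreducibleCharSum, mul_left_comm]

theorem card_mul_irreducibleCharSum_one_add {ψ : AddChar F R} (hψ : ψ.IsPrimitive) {m : ℕ}
    (hm : m.Prime) (a : F) :
    (Fintype.card F : R) *
        (m * irreducibleCharSum (1 : MulChar F R) m a +
          ∑ x : F with m * x = a, (1 : MulChar F R) x) =
      (Fintype.card F : R) ^ m - if a = 0 then (Fintype.card F : R) else 0 := by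
  have hΛ (c : F) : primePowerSum (charWeight (1 : MulChar F R) (ψ.mulShift c)) m =
      (if c = 0 then (Fintype.card F : R) ^ m else 0) - 1 := by
    split_ifs with hc
    · rw [hc, AddChar.mulShift_zero, primePowerSum_charWeight_one_one]
    · rw [primePowerSum_charWeight (Or.inr (hψ hc)) hm.ne_zero, gaussSum_one_left (hψ hc),
        neg_neg, one_pow, zero_sub]
  have h := card_mul_irreducibleCharSum_add (1 : MulChar F R) hψ hm a
  rw [one_pow] at h
  have hsum := sum_neg_mul_mulShift hψ a 0
  simp only [AddChar.map_zero_eq_one, mul_one, eq_comm (a := (0 : F))] at hsum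
  simp only [h, hΛ, mul_sub, mul_one, mul_ite, mul_zero, Finset.sum_sub_distrib, hsum,
    Finset.sum_ite_eq', Finset.mem_univ, if_true, zero_mul, neg_zero, AddChar.map_zero_eq_one,
    one_mul]

lemma gaussSum_mulShift_eq_inv_mul {χ : MulChar F R} (hχ : χ ≠ 1) (ψ : AddChar F R) (c : F) :
    gaussSum χ (ψ.mulShift c) = χ⁻¹ c * gaussSum χ ψ := by
  rcases eq_or_ne c 0 with rfl | hc
  · rw [AddChar.mulShift_zero, gaussSum_one_right hχ, MulChar.map_zero, zero_mul]
  · exact gaussSum_mulShift_eq χ ψ (Units.mk0 c hc)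

theorem card_mul_irreducibleCharSum_add_of_ne_one {χ : MulChar F R} {ψ : AddChar F R}
    (hψ : ψ.IsPrimitive) {m : ℕ} (hm : m.Prime) (hodd : Odd m) (hχ : χ ≠ 1) (hχm : χ ^ m ≠ 1)
    (a : F) :
    (Fintype.card F : R) * (m * irreducibleCharSum χ m a + ∑ x : F with m * x = a, (χ ^ m) x) =
      gaussSum χ ψ ^ m * ((χ ^ m) (-a) * gaussSum (χ ^ m)⁻¹ ψ) := by
  have hterm (c : F) : ψ (-(c * a)) * primePowerSum (charWeight χ (ψ.mulShift c)) m =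
      gaussSum χ ψ ^ m * ((χ ^ m)⁻¹ c * ψ.mulShift (-a) c) := by
    rw [primePowerSum_charWeight (Or.inl hχ) hm.ne_zero, hodd.neg_pow, neg_neg,
      gaussSum_mulShift_eq_inv_mul hχ, mul_pow, ← MulChar.pow_apply' _ hm.ne_zero, inv_pow,
      AddChar.mulShift_apply, neg_mul, mul_comm c a]
    ring
  rw [card_mul_irreducibleCharSum_add χ hψ hm, Finset.sum_congr rfl fun c _ => hterm c,
    ← Finset.mul_sum, ← gaussSum, gaussSum_mulShift_eq_inv_mul (inv_ne_one.2 hχm), inv_inv]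

end PrescribedTrace

section CosetCount

variable {F : Type*} [Field F] {K : Type*} [Field K]

lemma exists_pow_eq_of_ne_zero [Finite F] {g : Fˣ} (hg : ∀ u : Fˣ, u ∈ Subgroup.zpowers g) {x : F}
    (hx : x ≠ 0) : ∃ n : ℕ, (g : F) ^ n = x := by
  obtain ⟨n, hn⟩ := mem_powers_iff_mem_zpowers.2 (hg (Units.mk0 x hx))
  exact ⟨n, by simpa only [Units.val_pow_eq_pow_val, Units.val_mk0] using congrArg Units.val hn⟩

lemma exists_eq_pow_add_mul_iff [Finite F] {g : Fˣ}
    (hg : ∀ u : Fˣ, u ∈ Subgroup.zpowers g) {χ : MulChar F K} {s : ℕ}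
    (hχ : IsPrimitiveRoot (χ g) s) (h : ℕ) {x : F} (hx : x ≠ 0) :
    (∃ k : ℕ, x = (g : F) ^ (h + s * k)) ↔ χ x = χ g ^ h := by
  constructor
  · rintro ⟨k, rfl⟩
    rw [map_pow, pow_add, pow_mul, hχ.pow_eq_one, one_pow, mul_one]
  · intro hχx
    have hgh : (g : F) ^ h ≠ 0 := pow_ne_zero _ g.ne_zero
    obtain ⟨n, hn⟩ := exists_pow_eq_of_ne_zero hg (div_ne_zero hx hgh)
    have hn : x = (g : F) ^ h * g ^ n := by rw [hn, mul_div_cancel₀ x hgh]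
    have hone : χ g ^ n = 1 := by
      have hne : χ (g : F) ^ h ≠ 0 := pow_ne_zero _ (g.isUnit.map χ).ne_zero
      rwa [hn, map_mul, map_pow, map_pow, mul_eq_left₀ hne] at hχx
    obtain ⟨k, rfl⟩ := hχ.dvd_of_pow_eq_one n hone
    exact ⟨k, by rw [hn, pow_add]⟩

/-- Orthogonality of the powers of `χ` on the cosets of the `s`-th powers. -/
lemma sum_range_inv_pow_mul_pow_apply [Finite F] {g : Fˣ}
    (hg : ∀ u : Fˣ, u ∈ Subgroup.zpowers g) {χ : MulChar F K} {s : ℕ}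
    (hχ : IsPrimitiveRoot (χ g) s) (h : ℕ) {x : F} (hx : x ≠ 0) :
    ∑ j ∈ Finset.range s, (χ g ^ h)⁻¹ ^ j * (χ ^ j) x =
      if ∃ k : ℕ, x = (g : F) ^ (h + s * k) then (s : K) else 0 := by
  have hne : χ g ^ h ≠ 0 := pow_ne_zero _ (g.isUnit.map χ).ne_zero
  have hterm (j : ℕ) : (χ g ^ h)⁻¹ ^ j * (χ ^ j) x = ((χ g ^ h)⁻¹ * χ x) ^ j := by
    rw [mul_pow, ← Units.val_mk0 hx, MulChar.pow_apply_coe]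
  simp only [hterm]
  split_ifs with hk
  · simp only [(exists_eq_pow_add_mul_iff hg hχ h hx).1 hk, inv_mul_cancel₀ hne, one_pow,
      Finset.sum_const, Finset.card_range, nsmul_one]
  · have hroot : ((χ g ^ h)⁻¹ * χ x) ^ s = 1 := by
      obtain ⟨n, rfl⟩ := exists_pow_eq_of_ne_zero hg hx
      rw [map_pow, mul_pow, inv_pow, pow_right_comm, pow_right_comm _ n, hχ.pow_eq_one, one_pow,
        one_pow, inv_one, one_mul]
    have hone : (χ g ^ h)⁻¹ * χ x ≠ 1 := fun h1 =>
      hk ((exists_eq_pow_add_mul_iff hg hχ h hx).2 ((inv_mul_eq_one₀ hne).1 h1).symm)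
    refine eq_zero_of_ne_zero_of_mul_right_eq_zero (sub_ne_zero.2 hone) ?_
    rw [geom_sum_mul, hroot, sub_self]

variable [Fintype F]

lemma PP_eq_card (g : F) {m : ℕ} (hm : 0 < m) (s h : ℕ) (a : F) :
    PP F g m s h a = (((monicIrreducibles F m).filter fun P => -P.nextCoeff = a).filter fun P =>
      ∃ k : ℕ, (-1 : F) ^ m * P.coeff 0 = g ^ (h + s * k)).card := by
  refine Nat.subtype_card _ fun P => ?_
  simp only [Finset.mem_filter, mem_monicIrreducibles, and_assoc]
  refine and_congr_right fun _ => and_congr_right fun hdeg => and_congr_right fun _ => ?_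
  rw [nextCoeff_of_natDegree_pos (hdeg ▸ hm), hdeg, neg_eq_iff_eq_neg]

theorem natCast_mul_PP {g : Fˣ} (hg : ∀ u : Fˣ, u ∈ Subgroup.zpowers g)
    {χ : MulChar F K} {s : ℕ} (hχ : IsPrimitiveRoot (χ g) s) {m : ℕ} (hm : 2 ≤ m) (h : ℕ) (a : F) :
    (s : K) * PP F g m s h a =
      ∑ j ∈ Finset.range s, (χ g ^ h)⁻¹ ^ j * irreducibleCharSum (χ ^ j) m a := by
  simp only [irreducibleCharSum, Finset.mul_sum]
  rw [Finset.sum_comm, PP_eq_card _ (by omega), Finset.natCast_card_filter, Finset.mul_sum]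
  refine Finset.sum_congr rfl fun P hP => ?_
  obtain ⟨-, hdeg, hirr⟩ := mem_monicIrreducibles.1 (Finset.mem_filter.1 hP).1
  have hroot : P.coeff 0 ≠ 0 := fun h0 =>
    hirr.not_isRoot_of_natDegree_ne_one (by omega) (x := 0) (zero_isRoot_of_coeff_zero_eq_zero h0)
  rw [sum_range_inv_pow_mul_pow_apply hg hχ h
    (mul_ne_zero (pow_ne_zero _ (neg_ne_zero.2 one_ne_zero)) hroot), mul_ite, mul_one, mul_zero]

end CosetCount

section QuarticCharacter

lemma apply_neg_one_mul_self {R R' : Type*} [CommRing R] [CommRing R'] (χ : MulChar R R') :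
    χ (-1) * χ (-1) = 1 := by
  rw [← map_mul, neg_one_mul, neg_neg, map_one]

variable {F : Type*} [Field F] [Fintype F]

section GaussSum

variable {R : Type*} [CommRing R] [IsDomain R] {ψ : AddChar F R}

lemma gaussSum_mul_gaussSum_inv {χ : MulChar F R} (hχ : χ ≠ 1) (hψ : ψ.IsPrimitive) :
    gaussSum χ ψ * gaussSum χ⁻¹ ψ = χ (-1) * Fintype.card F := by
  rw [← gaussSum_mul_gaussSum_eq_card hχ hψ, ← mul_gaussSum_inv_eq_gaussSum χ⁻¹ ψ,
    MulChar.inv_apply', inv_neg_one, mul_left_comm]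

lemma gaussSum_pow_four {χ : MulChar F R} (hχ : orderOf χ = 4) (hψ : ψ.IsPrimitive) :
    gaussSum χ ψ ^ 4 = Fintype.card F * jacobiSum χ χ ^ 2 := by
  have hsq : χ ^ 2 ≠ 1 := fun h => absurd (hχ ▸ orderOf_dvd_of_pow_eq_one h) (by decide)
  have hquad : (χ ^ 2).IsQuadratic := by
    rw [MulChar.isQuadratic_iff_sq_eq_one, ← pow_mul, show 2 * 2 = orderOf χ from hχ.symm,
      pow_orderOf_eq_one]
  have hneg : (χ ^ 2) (-1) = 1 := by
    rw [MulChar.pow_apply' _ two_ne_zero, ← map_pow, neg_one_sq, map_one]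
  have hJ := jacobiSum_mul_nontrivial (pow_two χ ▸ hsq) ψ
  rw [← pow_two, ← pow_two] at hJ
  rw [show 4 = 2 * 2 from rfl, pow_mul, ← hJ, mul_pow, gaussSum_sq hsq hquad hψ, hneg, one_mul]

end GaussSum

section Evaluation

variable {χ : MulChar F ℂ} {m : ℕ}

lemma natCast_mul_irreducibleCharSum_one_add (hm : m.Prime) (a : F) :
    m * irreducibleCharSum (1 : MulChar F ℂ) m a + ∑ x : F with m * x = a, (1 : MulChar F ℂ) x =
      (Fintype.card F : ℂ) ^ (m - 1) - if a = 0 then 1 else 0 := by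
  have hψ := AddChar.FiniteField.primitiveChar_to_Complex_isPrimitive F
  refine mul_left_cancel₀ (Nat.cast_ne_zero.2 (Fintype.card_ne_zero (α := F))) ?_
  rw [card_mul_irreducibleCharSum_one_add hψ hm, mul_sub, mul_pow_sub_one hm.ne_zero, mul_ite,
    mul_one, mul_zero]

lemma natCast_mul_irreducibleCharSum_add_of_orderOf_eq_two (hχ : orderOf χ = 2) (hm : m.Prime)
    (hodd : Odd m) (a : F) :
    m * irreducibleCharSum χ m a + ∑ x : F with m * x = a, χ x =
      (χ (-1) * Fintype.card F) ^ ((m - 1) / 2) * χ a := by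
  obtain ⟨k, hk⟩ := hodd
  have hψ := AddChar.FiniteField.primitiveChar_to_Complex_isPrimitive F
  have hsq : χ ^ 2 = 1 := hχ ▸ pow_orderOf_eq_one χ
  have hinv : χ⁻¹ = χ := inv_eq_of_mul_eq_one_left (pow_two χ ▸ hsq)
  have hχm : χ ^ m = χ := by rw [hk, pow_succ, pow_mul, hsq, one_pow, one_mul]
  have hne : χ ≠ 1 := fun h => by simp [h] at hχ
  have h := card_mul_irreducibleCharSum_add_of_ne_one hψ hm ⟨k, hk⟩ hne (hχm.symm ▸ hne) a
  have hG := gaussSum_sq hne (MulChar.isQuadratic_iff_sq_eq_one.2 hsq) hψ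
  rw [hχm, hinv, neg_eq_neg_one_mul, map_mul] at h
  refine mul_left_cancel₀ (Nat.cast_ne_zero.2 Fintype.card_ne_zero) (h.trans ?_)
  calc gaussSum χ _ ^ m * (χ (-1) * χ a * gaussSum χ _)
      = (gaussSum χ _ ^ 2) ^ k * (χ (-1) * χ a * gaussSum χ _ ^ 2) := by rw [hk]; ring
    _ = _ := by
      rw [hG, show (m - 1) / 2 = k by omega]
      linear_combination
        (χ (-1) * Fintype.card F) ^ k * Fintype.card F * χ a * apply_neg_one_mul_self χ

lemma natCast_mul_irreducibleCharSum_add_of_mod_four_eq_one (hχ : orderOf χ = 4) (hm : m.Prime)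
    (hm4 : m % 4 = 1) (a : F) :
    m * irreducibleCharSum χ m a + ∑ x : F with m * x = a, χ x =
      Fintype.card F ^ ((m - 1) / 4) * jacobiSum χ χ ^ ((m - 1) / 2) * χ a := by
  obtain ⟨k, hk⟩ : ∃ k, m = 4 * k + 1 := ⟨m / 4, by omega⟩
  have hψ := AddChar.FiniteField.primitiveChar_to_Complex_isPrimitive F
  have hχm : χ ^ m = χ := by
    rw [hk, pow_succ, pow_mul, ← hχ, pow_orderOf_eq_one, one_pow, one_mul]
  have hne : χ ≠ 1 := fun h => by simp [h] at hχ
  have h := card_mul_irreducibleCharSum_add_of_ne_one hψ hm ⟨2 * k, by omega⟩ hne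
    (hχm.symm ▸ hne) a
  have hG := gaussSum_mul_gaussSum_inv hne hψ
  rw [hχm, neg_eq_neg_one_mul, map_mul] at h
  refine mul_left_cancel₀ (Nat.cast_ne_zero.2 Fintype.card_ne_zero) (h.trans ?_)
  calc gaussSum χ _ ^ m * (χ (-1) * χ a * gaussSum χ⁻¹ _)
      = (gaussSum χ _ ^ 4) ^ k * (χ (-1) * χ a * (gaussSum χ _ * gaussSum χ⁻¹ _)) := by
        rw [hk]; ring
    _ = _ := by
      rw [hG, gaussSum_pow_four hχ hψ, show (m - 1) / 4 = k by omega,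
        show (m - 1) / 2 = 2 * k by omega]
      linear_combination
        Fintype.card F ^ k * jacobiSum χ χ ^ (2 * k) * Fintype.card F * χ a *
          apply_neg_one_mul_self χ

lemma natCast_mul_irreducibleCharSum_add_of_mod_four_eq_three (hχ : orderOf χ = 4) (hm : m.Prime)
    (hm4 : m % 4 = 3) (a : F) :
    m * irreducibleCharSum χ m a + ∑ x : F with m * x = a, χ⁻¹ x =
      χ (-1) * Fintype.card F ^ ((m - 3) / 4) * jacobiSum χ χ ^ ((m + 1) / 2) * χ⁻¹ a := by
  obtain ⟨k, hk⟩ : ∃ k, m = 4 * k + 3 := ⟨m / 4, by omega⟩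
  have hψ := AddChar.FiniteField.primitiveChar_to_Complex_isPrimitive F
  have hχm : χ ^ m = χ⁻¹ := by
    rw [eq_inv_iff_mul_eq_one, ← pow_succ, hk, ← mul_add_one 4 k, pow_mul, ← hχ,
      pow_orderOf_eq_one, one_pow]
  have hne : χ ≠ 1 := fun h => by simp [h] at hχ
  have h := card_mul_irreducibleCharSum_add_of_ne_one hψ hm ⟨2 * k + 1, by omega⟩ hne
    (hχm.symm ▸ inv_ne_one.2 hne) a
  have hneg : χ⁻¹ (-1) = χ (-1) := by rw [MulChar.inv_apply', inv_neg_one]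
  rw [hχm, inv_inv, neg_eq_neg_one_mul, map_mul, hneg] at h
  refine mul_left_cancel₀ (Nat.cast_ne_zero.2 Fintype.card_ne_zero) (h.trans ?_)
  calc gaussSum χ _ ^ m * (χ (-1) * χ⁻¹ a * gaussSum χ _)
      = (gaussSum χ _ ^ 4) ^ (k + 1) * (χ (-1) * χ⁻¹ a) := by rw [hk]; ring
    _ = _ := by
      rw [gaussSum_pow_four hχ hψ, show (m - 3) / 4 = k by omega,
        show (m + 1) / 2 = 2 * (k + 1) by omega]
      ring

end Evaluation

section Generator

lemma orderOf_eq_orderOf_apply {M R : Type*} [CommMonoid M] [CommMonoidWithZero R] {g : Mˣ}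
    (hg : ∀ u : Mˣ, u ∈ Subgroup.zpowers g) (χ : MulChar M R) : orderOf χ = orderOf (χ g) := by
  rw [orderOf_eq_orderOf_iff]
  intro n
  rw [MulChar.eq_iff hg, MulChar.pow_apply_coe, MulChar.one_apply_coe]

lemma orderOf_eq_four {M : Type*} [CommMonoid M] {g : Mˣ}
    (hg : ∀ u : Mˣ, u ∈ Subgroup.zpowers g) {χ : MulChar M ℂ} (hχ : χ g = I) :
    orderOf χ = 4 := by
  rw [orderOf_eq_orderOf_apply hg, hχ, ← Complex.isPrimitiveRoot_I.eq_orderOf]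

variable {g : Fˣ} {χ : MulChar F ℂ} {f : ℕ}

lemma isPrimitiveRoot_generator (hg : ∀ u : Fˣ, u ∈ Subgroup.zpowers g) :
    IsPrimitiveRoot (g : F) (Fintype.card F - 1) := by
  rw [← Fintype.card_units, ← Nat.card_eq_fintype_card, ← orderOf_eq_card_of_forall_mem_zpowers hg,
    IsPrimitiveRoot.coe_units_iff]
  exact IsPrimitiveRoot.orderOf g

lemma generator_pow_two_mul (hg : ∀ u : Fˣ, u ∈ Subgroup.zpowers g)
    (hq : Fintype.card F = 4 * f + 1) : (g : F) ^ (2 * f) = -1 := by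
  have hpos := Fintype.one_lt_card (α := F)
  exact IsPrimitiveRoot.eq_neg_one_of_two_right <|
    (isPrimitiveRoot_generator hg).pow (by omega) (by omega)

lemma apply_neg_one_eq (hg : ∀ u : Fˣ, u ∈ Subgroup.zpowers g)
    (hq : Fintype.card F = 4 * f + 1) (hχ : χ g = I) : χ (-1) = (-1) ^ f := by
  rw [← generator_pow_two_mul hg hq, map_pow, hχ, pow_mul, I_sq]

lemma quadraticChar_apply_eq_sq (hg : ∀ u : Fˣ, u ∈ Subgroup.zpowers g)
    (hq : Fintype.card F = 4 * f + 1) (hχ : χ g = I) (x : F) :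
    (quadraticChar F x : ℂ) = (χ ^ 2) x := by
  have hF : ringChar F ≠ 2 := fun h => by
    have := FiniteField.even_card_iff_char_two.1 h
    omega
  have hgen : quadraticChar F (g : F) = -1 := by
    refine (quadraticChar_dichotomy g.ne_zero).resolve_left fun h => quadraticChar_ne_one hF ?_
    rw [MulChar.eq_iff hg, h, MulChar.one_apply_coe]
  have heq : (quadraticChar F).ringHomComp (Int.castRingHom ℂ) = χ ^ 2 := by
    rw [MulChar.eq_iff hg, MulChar.ringHomComp_apply, hgen, MulChar.pow_apply_coe, hχ, I_sq,
      map_neg, map_one]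
  rw [← heq, MulChar.ringHomComp_apply, Int.coe_castRingHom]

lemma irreducibleCharSum_inv (χ : MulChar F ℂ) (m : ℕ) (a : F) :
    irreducibleCharSum χ⁻¹ m a = starRingEnd ℂ (irreducibleCharSum χ m a) := by
  simp only [irreducibleCharSum, map_sum, ← MulChar.star_apply', starRingEnd_apply]

theorem four_mul_PP (hg : ∀ u : Fˣ, u ∈ Subgroup.zpowers g) (hχ : χ g = I) {m : ℕ} (hm : 2 ≤ m)
    (h : ℕ) (a : F) :
    4 * (PP F g m 4 h a : ℂ) = irreducibleCharSum (1 : MulChar F ℂ) m a +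
      (-1) ^ h *
        (irreducibleCharSum (χ ^ 2) m a + 2 * ((I ^ h * irreducibleCharSum χ m a).re : ℂ)) := by
  have hroot : IsPrimitiveRoot (χ g) 4 := hχ ▸ Complex.isPrimitiveRoot_I
  have hcube : χ ^ 3 = χ⁻¹ := by
    rw [eq_inv_iff_mul_eq_one, ← pow_succ, ← orderOf_dvd_iff_pow_eq_one, orderOf_eq_four hg hχ]
  have hconj : irreducibleCharSum (χ ^ 3) m a = starRingEnd ℂ (irreducibleCharSum χ m a) := by
    rw [hcube, irreducibleCharSum_inv]
  have hI : (I ^ h)⁻¹ = (-1) ^ h * I ^ h := by rw [← inv_pow, inv_I, neg_pow]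
  have hsq : I ^ h * I ^ h = (-1) ^ h := by rw [← mul_pow, I_mul_I]
  have hone : (-1 : ℂ) ^ h * (-1) ^ h = 1 := by rw [← mul_pow, neg_one_mul, neg_neg, one_pow]
  have hPP := natCast_mul_PP hg hroot hm h a
  simp only [Finset.sum_range_succ, Finset.sum_range_zero, pow_zero, pow_one, hχ, hI,
    Nat.cast_ofNat] at hPP
  have hre := add_conj (I ^ h * irreducibleCharSum χ m a)
  rw [map_mul, map_pow, conj_I, ← hconj, neg_pow, ofReal_mul, ofReal_ofNat] at hre
  rw [hPP, ← hre]
  linear_combination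
    ((-1) ^ h * (-1) ^ h * irreducibleCharSum (χ ^ 2) m a +
      (-1) ^ h * (-1) ^ h * (-1) ^ h * I ^ h * irreducibleCharSum (χ ^ 3) m a) * hsq +
    ((-1) ^ h * irreducibleCharSum (χ ^ 2) m a +
      (-1) ^ h * (-1) ^ h * I ^ h * irreducibleCharSum (χ ^ 3) m a) * hone

end Generator

section Count

variable {g : Fˣ} {χ : MulChar F ℂ} {m : ℕ}

lemma sum_one_apply : ∑ x : F, (1 : MulChar F ℂ) x = Fintype.card F - 1 := by
  rw [MulChar.sum_one_eq_card_units, Fintype.card_units, Nat.cast_pred Fintype.card_pos]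

lemma irreducibleCharSum_apply_zero (hm : m.Prime) (hodd : Odd m) (hχm : χ ^ m ≠ 1) :
    irreducibleCharSum χ m 0 = 0 := by
  have hsum : ∑ x : F with (m : F) * x = 0, (χ ^ m) x = 0 := by
    by_cases hmF : (m : F) = 0
    · rw [sum_filter_natCast_mul_eq_of_eq_zero _ hmF, if_pos rfl, MulChar.sum_eq_zero_of_ne_one hχm]
    · rw [sum_filter_natCast_mul_eq_of_ne_zero _ hmF, zero_div, MulChar.map_zero]
  have h := card_mul_irreducibleCharSum_add_of_ne_one
    (AddChar.FiniteField.primitiveChar_to_Complex_isPrimitive F) hm hodd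
    (fun hχ => hχm (by rw [hχ, one_pow])) hχm 0
  rw [hsum, add_zero, neg_zero, MulChar.map_zero, zero_mul, mul_zero] at h
  exact (mul_eq_zero.1 ((mul_eq_zero.1 h).resolve_left
    (Nat.cast_ne_zero.2 Fintype.card_ne_zero))).resolve_left (Nat.cast_ne_zero.2 hm.ne_zero)

theorem PP_four_apply_zero (hg : ∀ u : Fˣ, u ∈ Subgroup.zpowers g) (hχ : χ g = I) (hm : m.Prime)
    (hm2 : 2 < m) (h : ℕ) : (PP F g m 4 h 0 : ℂ) = 1 / (4 * m) *
      ((Fintype.card F : ℂ) ^ (m - 1) - if (m : F) = 0 then (Fintype.card F : ℂ) else 1) := by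
  have hodd : Odd m := hm.odd_of_ne_two hm2.ne'
  have hord := orderOf_eq_four hg hχ
  have hχm (j : ℕ) (hj : ¬4 ∣ j * m) : (χ ^ j) ^ m ≠ 1 := by
    rwa [← pow_mul, Ne, ← orderOf_dvd_iff_pow_eq_one, hord]
  have hodd2 := Nat.odd_iff.1 hodd
  have h₁ : m * irreducibleCharSum (1 : MulChar F ℂ) m 0 =
      (Fintype.card F : ℂ) ^ (m - 1) - if (m : F) = 0 then (Fintype.card F : ℂ) else 1 := by
    rw [eq_sub_of_add_eq (natCast_mul_irreducibleCharSum_one_add hm (0 : F)), if_pos rfl]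
    split_ifs with hmF
    · rw [sum_filter_natCast_mul_eq_of_eq_zero _ hmF, if_pos rfl, sum_one_apply]
      ring
    · rw [sum_filter_natCast_mul_eq_of_ne_zero _ hmF, zero_div, MulChar.map_zero, sub_zero]
  have h₂ := irreducibleCharSum_apply_zero hm hodd (hχm 2 (by omega))
  have h₄ := irreducibleCharSum_apply_zero hm hodd (hχm 1 (by omega))
  rw [pow_one] at h₄
  have hPP := four_mul_PP hg hχ hm2.le h (0 : F)
  rw [h₂, h₄, mul_zero, zero_re, ofReal_zero, mul_zero, add_zero, mul_zero, add_zero] at hPP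
  have hm0 : (m : ℂ) ≠ 0 := Nat.cast_ne_zero.2 hm.ne_zero
  rw [← h₁, ← hPP]
  field_simp

lemma natCast_mul_irreducibleCharSum_sq_add {f : ℕ} (hg : ∀ u : Fˣ, u ∈ Subgroup.zpowers g)
    (hq : Fintype.card F = 4 * f + 1) (hχ : χ g = I) (hm : m.Prime) (hodd : Odd m) (a : F) :
    m * irreducibleCharSum (χ ^ 2) m a + ∑ x : F with m * x = a, (quadraticChar F x : ℂ) =
      (Fintype.card F : ℂ) ^ ((m - 1) / 2) * (quadraticChar F a : ℂ) := by
  have hord : orderOf (χ ^ 2) = 2 := by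
    rw [orderOf_eq_orderOf_apply hg, MulChar.pow_apply_coe, hχ, I_sq, orderOf_neg_one,
      ringChar.eq_zero, if_neg two_ne_zero.symm]
  have hneg : (χ ^ 2) (-1) = 1 := by
    rw [MulChar.pow_apply' _ two_ne_zero, pow_two, apply_neg_one_mul_self]
  have h := natCast_mul_irreducibleCharSum_add_of_orderOf_eq_two hord hm hodd a
  rw [hneg, one_mul] at h
  simpa only [quadraticChar_apply_eq_sq hg hq hχ] using h

lemma ofReal_re_natCast_pow_mul (n k : ℕ) (z : ℂ) :
    (((n : ℂ) ^ k * z).re : ℂ) = (n : ℂ) ^ k * z.re := by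
  rw [← ofReal_natCast, ← ofReal_pow, re_ofReal_mul, ofReal_mul]

lemma PP_four_eq (hg : ∀ u : Fˣ, u ∈ Subgroup.zpowers g) (hχ : χ g = I) (hm : 2 ≤ m) (h : ℕ)
    (a : F) : (PP F g m 4 h a : ℂ) = 1 / (4 * m) *
      (m * irreducibleCharSum (1 : MulChar F ℂ) m a +
        (-1) ^ h * (m * irreducibleCharSum (χ ^ 2) m a +
          2 * ((m * irreducibleCharSum χ m a * I ^ h).re : ℂ))) := by
  have hm0 : (m : ℂ) ≠ 0 := Nat.cast_ne_zero.2 (by omega)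
  have hre := ofReal_re_natCast_pow_mul m 1 (irreducibleCharSum χ m a * I ^ h)
  rw [pow_one] at hre
  have hPP := four_mul_PP hg hχ hm h a
  rw [mul_assoc (m : ℂ), hre, mul_comm (irreducibleCharSum χ m a)]
  field_simp
  linear_combination hPP

theorem PP_four_of_mod_four_eq_one {f : ℕ} (hg : ∀ u : Fˣ, u ∈ Subgroup.zpowers g)
    (hq : Fintype.card F = 4 * f + 1) (hχ : χ g = I) (hm : m.Prime) (hm4 : m % 4 = 1) (h : ℕ)
    {a : F} (ha : a ≠ 0) : (PP F g m 4 h a : ℂ) = 1 / (4 * m) *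
      ((Fintype.card F : ℂ) ^ (m - 1) - ∑ x : F with m * x = a, (1 : MulChar F ℂ) x + (-1) ^ h *
        ((Fintype.card F : ℂ) ^ ((m - 1) / 2) * quadraticChar F a -
          ∑ x : F with m * x = a, (quadraticChar F x : ℂ) +
        2 * ((((Fintype.card F : ℂ) ^ ((m - 1) / 4) * jacobiSum χ χ ^ ((m - 1) / 2) * χ a -
          ∑ x : F with m * x = a, χ x) * I ^ h).re : ℂ))) := by
  have hord := orderOf_eq_four hg hχ
  rw [PP_four_eq hg hχ hm.two_le, eq_sub_of_add_eq (natCast_mul_irreducibleCharSum_one_add hm a),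
    if_neg ha, sub_zero, eq_sub_of_add_eq
      (natCast_mul_irreducibleCharSum_sq_add hg hq hχ hm (Nat.odd_iff.2 (by omega)) a),
    eq_sub_of_add_eq (natCast_mul_irreducibleCharSum_add_of_mod_four_eq_one hord hm hm4 a)]

theorem PP_four_of_mod_four_eq_three {f : ℕ} (hg : ∀ u : Fˣ, u ∈ Subgroup.zpowers g)
    (hq : Fintype.card F = 4 * f + 1) (hχ : χ g = I) (hm : m.Prime) (hm4 : m % 4 = 3) (h : ℕ)
    {a : F} (ha : a ≠ 0) : (PP F g m 4 h a : ℂ) = 1 / (4 * m) *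
      ((Fintype.card F : ℂ) ^ (m - 1) - ∑ x : F with m * x = a, (1 : MulChar F ℂ) x + (-1) ^ h *
        ((Fintype.card F : ℂ) ^ ((m - 1) / 2) * quadraticChar F a -
          ∑ x : F with m * x = a, (quadraticChar F x : ℂ) +
        2 * ((((-1) ^ f * (Fintype.card F : ℂ) ^ ((m - 3) / 4) * jacobiSum χ χ ^ ((m + 1) / 2) *
          χ⁻¹ a - ∑ x : F with m * x = a, χ⁻¹ x) * I ^ h).re : ℂ))) := by
  have hord := orderOf_eq_four hg hχ
  rw [PP_four_eq hg hχ hm.two_le, eq_sub_of_add_eq (natCast_mul_irreducibleCharSum_one_add hm a),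
    if_neg ha, sub_zero, eq_sub_of_add_eq
      (natCast_mul_irreducibleCharSum_sq_add hg hq hχ hm (Nat.odd_iff.2 (by omega)) a),
    eq_sub_of_add_eq (natCast_mul_irreducibleCharSum_add_of_mod_four_eq_three hord hm hm4 a),
    apply_neg_one_eq hg hq hχ]

lemma quadraticChar_div (a : F) {b : F} (hb : b ≠ 0) :
    quadraticChar F (a / b) = quadraticChar F a * quadraticChar F b := by
  rw [← div_mul_cancel₀ a hb, mul_div_cancel_right₀ _ hb, map_mul, mul_assoc, ← pow_two,
    quadraticChar_sq_one hb, mul_one]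

lemma apply_div_eq_apply_pow_three_mul {K R : Type*} [Field K] [CommRing R] {χ : MulChar K R}
    (hχ : orderOf χ = 4) (a : K) {b : K} (hb : b ≠ 0) : χ (a / b) = χ (b ^ 3 * a) := by
  have hb4 : χ b ^ 4 = 1 := by
    rw [← MulChar.pow_apply' χ four_ne_zero, ← hχ, pow_orderOf_eq_one,
      MulChar.one_apply hb.isUnit]
  rw [← div_mul_cancel₀ a hb, mul_div_cancel_right₀ _ hb, mul_comm (a / b), ← mul_assoc,
    ← pow_succ, map_mul, map_pow, hb4, one_mul]

lemma re_inv_apply_mul_I_pow {K : Type*} [Field K] [Finite K] (χ : MulChar K ℂ) (x : K) (h : ℕ) :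
    (χ⁻¹ x * I ^ h).re = (χ x * I ^ (3 * h)).re := by
  rw [← MulChar.star_apply', ← Complex.conj_re, map_mul, map_pow, conj_I, pow_mul, I_pow_three,
    ← starRingEnd_apply, conj_conj]

end Count

end QuarticCharacter

section GaussianInt

open Zsqrtd GaussianInt

lemma irreducible_of_prime_norm {d : ℤ} {z : ℤ√d} (hz : Prime z.norm) : Irreducible z where
  not_isUnit h := hz.not_isUnit ((isUnit_iff_norm_isUnit z).1 h)
  isUnit_or_isUnit {x y} h := by
    rw [h, norm_mul] at hz
    simpa only [isUnit_iff_norm_isUnit] using hz.irreducible.isUnit_or_isUnit rfl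

lemma associated_of_map_eq_zero {R S : Type*} [CommRing R] [IsDomain R] [IsPrincipalIdealRing R]
    [Semiring S] [Nontrivial S] (φ : R →+* S) {z w : R} (hz : Irreducible z)
    (hw : Irreducible w) (hφz : φ z = 0) (hφw : φ w = 0) : Associated z w := by
  have hker {x : R} (hx : Irreducible x) (hφx : φ x = 0) : Ideal.span {x} = RingHom.ker φ :=
    (PrincipalIdealRing.isMaximal_of_irreducible hx).eq_of_le (RingHom.ker_ne_top φ)
      ((Ideal.span_singleton_le_iff_mem _).2 hφx)
  exact Ideal.span_singleton_eq_span_singleton.1 ((hker hz hφz).trans (hker hw hφw).symm)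

lemma norm_eq_re_sq_add_im_sq (z : GaussianInt) : z.norm = z.re ^ 2 + z.im ^ 2 := by
  rw [Zsqrtd.norm_def]
  ring

lemma sq_eq_sq_of_associated {z w : GaussianInt} (h : Associated z w)
    (him : Even z.im) (hw : Odd w.re) : z ^ 2 = w ^ 2 := by
  obtain ⟨u, rfl⟩ := h
  have hu : (u : GaussianInt).re ^ 2 + (u : GaussianInt).im ^ 2 = 1 := by
    rw [← norm_eq_re_sq_add_im_sq, norm_eq_one_iff' (by decide)]
    exact u.isUnit
  have hure : (u : GaussianInt).re ≠ 0 := by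
    intro h0
    rw [re_mul, h0, mul_zero, zero_add] at hw
    exact Int.not_even_iff_odd.2 hw ((him.mul_left _).mul_right _)
  have hre_sq : 0 < (u : GaussianInt).re ^ 2 := by positivity
  have huim : (u : GaussianInt).im = 0 := by
    rw [← sq_eq_zero_iff]
    linarith [sq_nonneg (u : GaussianInt).im]
  have hu_sq : (u : GaussianInt) ^ 2 = 1 := by
    ext <;> simp [pow_two, huim, ← hu]
  rw [mul_pow, hu_sq, mul_one]

lemma even_im_of_odd_norm {z : GaussianInt} (hre : Odd z.re) (hnorm : Odd z.norm) :
    Even z.im := by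
  rw [norm_eq_re_sq_add_im_sq, Int.odd_add] at hnorm
  exact (Int.even_pow.1 (hnorm.1 hre.pow)).1

lemma isPrimitiveRoot_sqrtd : IsPrimitiveRoot (sqrtd : GaussianInt) 4 := by
  refine IsPrimitiveRoot.of_map_of_injective (f := toComplex) ?_ toComplex_injective
  rw [sqrtd, toComplex_def', Int.cast_zero, Int.cast_one, zero_add, one_mul]
  exact Complex.isPrimitiveRoot_I

lemma normSq_jacobiSum {F : Type*} [Field F] [Fintype F] {χ φ : MulChar F ℂ} (hχ : χ ≠ 1)
    (hφ : φ ≠ 1) (hχφ : χ * φ ≠ 1) : normSq (jacobiSum χ φ) = Fintype.card F := by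
  have hconj : jacobiSum χ⁻¹ φ⁻¹ = starRingEnd ℂ (jacobiSum χ φ) := by
    simp only [jacobiSum, map_sum, map_mul, starRingEnd_apply, MulChar.star_apply']
  have hchar : ringChar ℂ ≠ ringChar F := by
    rw [ringChar.eq_zero]
    exact (CharP.ringChar_ne_zero_of_finite F).symm
  have h := jacobiSum_mul_jacobiSum_inv hchar hχ hφ hχφ
  rw [hconj, mul_conj] at h
  exact_mod_cast h

lemma sum_pow_mul_one_sub_pow_eq_zero {F : Type*} [Field F] [Fintype F] {m n : ℕ}
    (h : m + n < Fintype.card F - 1) : ∑ x : F, x ^ m * (1 - x) ^ n = 0 := by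
  simp only [sub_eq_add_neg, add_pow, one_pow, one_mul, Finset.mul_sum]
  rw [Finset.sum_comm]
  refine Finset.sum_eq_zero fun i _ => ?_
  have hlt : m + (n - i) < Fintype.card F - 1 := by omega
  calc ∑ x : F, x ^ m * ((-x) ^ (n - i) * n.choose i)
      = (-1) ^ (n - i) * n.choose i * ∑ x : F, x ^ (m + (n - i)) := by
        rw [Finset.mul_sum]
        refine Finset.sum_congr rfl fun x _ => ?_
        rw [neg_pow]
        ring
    _ = 0 := by rw [FiniteField.sum_pow_lt_card_sub_one F _ hlt, mul_zero]

section JacobiSum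

variable {F : Type*} [Field F] [Fintype F] {g : Fˣ} {f : ℕ} {χ : MulChar F GaussianInt}

lemma exists_mulChar_apply_eq_sqrtd (hg : ∀ u : Fˣ, u ∈ Subgroup.zpowers g)
    (hq : Fintype.card F = 4 * f + 1) : ∃ χ : MulChar F GaussianInt, χ g = sqrtd := by
  have hi := isPrimitiveRoot_sqrtd.pow_eq_one
  have hunit : Units.ofPowEqOne _ 4 hi four_ne_zero ∈
      rootsOfUnity (Fintype.card Fˣ) GaussianInt := by
    rw [_root_.mem_rootsOfUnity, Fintype.card_units, hq, Nat.add_sub_cancel, pow_mul,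
      Units.pow_ofPowEqOne, one_pow]
  exact ⟨MulChar.ofRootOfUnity hunit hg, MulChar.ofRootOfUnity_spec hunit hg⟩

lemma toComplex_jacobiSum (hg : ∀ u : Fˣ, u ∈ Subgroup.zpowers g) (hχ : χ g = sqrtd)
    {χ4 : MulChar F ℂ} (hχ4 : χ4 g = I) : toComplex (jacobiSum χ χ) = jacobiSum χ4 χ4 := by
  have h : χ.ringHomComp toComplex = χ4 := by
    rw [MulChar.eq_iff hg, MulChar.ringHomComp_apply, hχ, hχ4, sqrtd, toComplex_def']
    simp only [Int.cast_zero, Int.cast_one, zero_add, one_mul]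
  rw [← jacobiSum_ringHomComp, h]

lemma norm_jacobiSum (hg : ∀ u : Fˣ, u ∈ Subgroup.zpowers g) (hχ : χ g = sqrtd)
    {χ4 : MulChar F ℂ} (hχ4 : χ4 g = I) : (jacobiSum χ χ).norm = Fintype.card F := by
  have hord := orderOf_eq_four hg hχ4
  have hne : χ4 ≠ 1 := fun h => by simp [h] at hord
  have hsq : χ4 * χ4 ≠ 1 := fun h =>
    absurd (hord ▸ orderOf_dvd_of_pow_eq_one (pow_two χ4 ▸ h)) (by decide)
  have h := normSq_jacobiSum hne hne hsq
  rw [← toComplex_jacobiSum hg hχ hχ4, ← intCast_real_norm] at h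
  exact_mod_cast h

lemma odd_re_jacobiSum (hg : ∀ u : Fˣ, u ∈ Subgroup.zpowers g)
    (hq : Fintype.card F = 4 * f + 1) (hχ : χ g = sqrtd) : Odd (jacobiSum χ χ).re := by
  have hχ4 : χ ^ 4 = 1 := by
    rw [← orderOf_dvd_iff_pow_eq_one, orderOf_eq_orderOf_apply hg, hχ,
      ← isPrimitiveRoot_sqrtd.eq_orderOf]
  obtain ⟨z, -, hz⟩ := exists_jacobiSum_eq_neg_one_add (by decide) hχ4 hχ4
    (hq ▸ ⟨f, Nat.add_sub_cancel _ _⟩) isPrimitiveRoot_sqrtd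
  have hsq : (sqrtd - 1 : GaussianInt) ^ 2 = ⟨0, -2⟩ := by decide
  refine ⟨z.im - 1, ?_⟩
  rw [hz, hsq, re_add, re_neg, re_one, re_mul]
  ring

/-- `χ` reduces modulo the prime `ker φ` to the power residue character `x ↦ x ^ f`, so its Jacobi
sum reduces to a power sum of degree less than `q - 1`. -/
lemma map_jacobiSum_eq_zero (hg : ∀ u : Fˣ, u ∈ Subgroup.zpowers g)
    (hq : Fintype.card F = 4 * f + 1) (hχ : χ g = sqrtd) {φ : GaussianInt →+* F}
    (hφ : φ sqrtd = (g : F) ^ f) : φ (jacobiSum χ χ) = 0 := by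
  have hf : 0 < f := by
    have := Fintype.one_lt_card (α := F)
    omega
  have hpow (x : F) : χ.ringHomComp φ x = x ^ f := by
    rcases eq_or_ne x 0 with rfl | hx
    · rw [MulChar.map_zero, zero_pow hf.ne']
    · obtain ⟨n, rfl⟩ := exists_pow_eq_of_ne_zero hg hx
      rw [map_pow, MulChar.ringHomComp_apply, hχ, hφ, pow_right_comm]
  rw [← jacobiSum_ringHomComp, jacobiSum]
  simp only [hpow]
  exact sum_pow_mul_one_sub_pow_eq_zero (by omega)

end JacobiSum

theorem add_I_mul_sq_eq_jacobiSum_sq {p f : ℕ} [Fact p.Prime] (hp : p = 4 * f + 1)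
    {g : (ZMod p)ˣ} (hg : ∀ u : (ZMod p)ˣ, u ∈ Subgroup.zpowers g) {χ : MulChar (ZMod p) ℂ}
    (hχ : χ g = I) {a b : ℤ} (hab : a ^ 2 + b ^ 2 = p) (ha : Odd a)
    (hb : (b : ZMod p) = a * (g : ZMod p) ^ f) : (a + I * b : ℂ) ^ 2 = jacobiSum χ χ ^ 2 := by
  have hq : Fintype.card (ZMod p) = 4 * f + 1 := (ZMod.card p).trans hp
  have hi : (g : ZMod p) ^ f * (g : ZMod p) ^ f = -1 := by
    rw [← pow_add, ← two_mul, generator_pow_two_mul hg hq]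
  let φ : GaussianInt →+* ZMod p := lift ⟨(g : ZMod p) ^ f, by exact_mod_cast hi⟩
  have hφ (z : GaussianInt) : φ z = z.re + z.im * (g : ZMod p) ^ f := rfl
  obtain ⟨χ', hχ'⟩ := exists_mulChar_apply_eq_sqrtd hg hq
  have hJnorm : (jacobiSum χ' χ').norm = p := by rw [norm_jacobiSum hg hχ' hχ, ZMod.card]
  have hJ : φ (jacobiSum χ' χ') = 0 :=
    map_jacobiSum_eq_zero hg hq hχ' (by simp [hφ, sqrtd])
  have hnorm : norm (⟨a, b⟩ : GaussianInt) = p := (norm_eq_re_sq_add_im_sq _).trans hab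
  have hab0 : φ ⟨a, b⟩ = 0 := by
    rw [hφ, hb]
    linear_combination (a : ZMod p) * hi
  have hprime : Prime (p : ℤ) := Nat.prime_iff_prime_int.1 Fact.out
  have him : Even b := even_im_of_odd_norm (z := ⟨a, b⟩) ha (hnorm ▸ ⟨2 * f, by omega⟩)
  have hassoc := associated_of_map_eq_zero φ (irreducible_of_prime_norm (hnorm ▸ hprime))
    (irreducible_of_prime_norm (hJnorm ▸ hprime)) hab0 hJ
  have hsq := sq_eq_sq_of_associated hassoc him (odd_re_jacobiSum hg hq hχ')
  rw [← toComplex_jacobiSum hg hχ' hχ, ← map_pow, ← hsq, map_pow, toComplex_def', mul_comm I]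

lemma odd_of_modEq_neg_legendreSym_two {p : ℕ} [Fact p.Prime] (hp : p ≠ 2) {a : ℤ}
    (ha : a ≡ -legendreSym p 2 [ZMOD 4]) : Odd a := by
  have h2 : ((2 : ℤ) : ZMod p) ≠ 0 := by
    rw [Ne, ZMod.intCast_zmod_eq_zero_iff_dvd]
    exact_mod_cast fun h => hp ((Nat.prime_dvd_prime_iff_eq Fact.out Nat.prime_two).1 h)
  rcases legendreSym.eq_one_or_neg_one p h2 with h | h <;> rw [h, Int.ModEq] at ha <;>
    exact Int.odd_iff.2 (by omega)

end GaussianInt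

theorem stmt13_general {F : Type*} [Field F] [Fintype F] [hF : DecidableEq F]
    (p m h f : ℕ) [CharP F p] (hm : m.Prime) (hm2 : 2 < m) (hq : Fintype.card F = 4 * f + 1)
    (g : Fˣ) (hg : ∀ u : Fˣ, u ∈ Subgroup.zpowers g)
    (χ4 : MulChar F ℂ) (hχ4g : χ4 (g : F) = Complex.I)
    (π4 : ℂ) (hπ4 : π4 ^ 2 = jacobiSum χ4 χ4 ^ 2) (a : F) :
    (a = 0 → m = p →
      (PP F (g : F) m 4 h a : ℂ) =
        (Fintype.card F / (4 * (p : ℂ))) * ((Fintype.card F : ℂ) ^ (p - 2) - 1)) ∧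
    (a = 0 → m ≠ p →
      (PP F (g : F) m 4 h a : ℂ) =
        (1 / (4 * (m : ℂ))) * ((Fintype.card F : ℂ) ^ (m - 1) - 1)) ∧
    (a ≠ 0 → m = p → p % 4 = 1 →
      (PP F (g : F) m 4 h a : ℂ) =
        (1 / (4 * (p : ℂ))) * ((Fintype.card F : ℂ) ^ (p - 1) +
          (-1 : ℂ) ^ h * ((Fintype.card F : ℂ) ^ ((p - 1) / 2) * (quadraticChar F a : ℂ) +
            2 * (Fintype.card F : ℂ) ^ ((p - 1) / 4) *
              ((π4 ^ ((p - 1) / 2) * χ4 a * Complex.I ^ h).re : ℂ)))) ∧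
    (a ≠ 0 → m = p → p % 4 = 3 →
      (PP F (g : F) m 4 h a : ℂ) =
        (1 / (4 * (p : ℂ))) * ((Fintype.card F : ℂ) ^ (p - 1) +
          (-1 : ℂ) ^ h * ((Fintype.card F : ℂ) ^ ((p - 1) / 2) * (quadraticChar F a : ℂ) +
            2 * (((-1 : ℂ) ^ f * (Fintype.card F : ℂ) ^ ((p - 3) / 4) * π4 ^ ((p + 1) / 2) *
              χ4⁻¹ a * Complex.I ^ h).re : ℂ)))) ∧
    (a ≠ 0 → m ≠ p → m % 4 = 1 →
      (PP F (g : F) m 4 h a : ℂ) =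
        (1 / (4 * (m : ℂ))) * ((Fintype.card F : ℂ) ^ (m - 1) - 1 +
          (-1 : ℂ) ^ h * ((quadraticChar F a : ℂ) *
              ((Fintype.card F : ℂ) ^ ((m - 1) / 2) - (quadraticChar F (m : F) : ℂ)) +
            2 * (((Fintype.card F : ℂ) ^ ((m - 1) / 4) * π4 ^ ((m - 1) / 2) * χ4 a *
              Complex.I ^ h - χ4 ((m : F) ^ 3 * a) * Complex.I ^ h).re : ℂ)))) ∧
    (a ≠ 0 → m ≠ p → m % 4 = 3 →
      (PP F (g : F) m 4 h a : ℂ) =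
        (1 / (4 * (m : ℂ))) * ((Fintype.card F : ℂ) ^ (m - 1) - 1 +
          (-1 : ℂ) ^ h * ((quadraticChar F a : ℂ) *
              ((Fintype.card F : ℂ) ^ ((m - 1) / 2) - (quadraticChar F (m : F) : ℂ)) +
            2 * (((-1 : ℂ) ^ f * (Fintype.card F : ℂ) ^ ((m - 3) / 4) * π4 ^ ((m + 1) / 2) *
              χ4⁻¹ a * Complex.I ^ h -
              χ4 ((m : F) ^ 3 * a) * Complex.I ^ (3 * h)).re : ℂ)))) := by
  obtain rfl : hF = fun _ _ => propDecidable _ := Subsingleton.elim _ _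
  have hmp : (m : F) = 0 ↔ m = p := by
    rw [CharP.cast_eq_zero_iff F p, Nat.prime_dvd_prime_iff_eq (CharP.char_is_prime F p) hm,
      eq_comm]
  have hπ {n : ℕ} (hn : Even n) : π4 ^ n = jacobiSum χ4 χ4 ^ n := by
    rw [← Nat.two_mul_div_two_of_even hn, pow_mul, hπ4, ← pow_mul]
  have hord := orderOf_eq_four hg hχ4g
  refine ⟨?_, ?_, ?_, ?_, ?_, ?_⟩
  · rintro rfl rfl
    rw [PP_four_apply_zero hg hχ4g hm hm2, if_pos (hmp.2 rfl), show m - 1 = m - 2 + 1 by omega]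
    ring
  · rintro rfl hne
    rw [PP_four_apply_zero hg hχ4g hm hm2, if_neg (hne ∘ hmp.1)]
  · rintro ha rfl hm4
    have hk : Even ((m - 1) / 2) := ⟨m / 4, by omega⟩
    simp only [PP_four_of_mod_four_eq_one hg hq hχ4g hm hm4 h ha, hπ hk,
      sum_filter_natCast_mul_eq_of_eq_zero _ (hmp.2 rfl), if_neg ha, sub_zero]
    rw [mul_assoc, mul_assoc, ofReal_re_natCast_pow_mul, ← mul_assoc (jacobiSum χ4 χ4 ^ _)]
    ring
  · rintro ha rfl hm4
    have hk : Even ((m + 1) / 2) := ⟨m / 4 + 1, by omega⟩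
    simp only [PP_four_of_mod_four_eq_three hg hq hχ4g hm hm4 h ha, hπ hk,
      sum_filter_natCast_mul_eq_of_eq_zero _ (hmp.2 rfl), if_neg ha, sub_zero]
  · intro ha hne hm4
    have hmF : (m : F) ≠ 0 := hne ∘ hmp.1
    have hk : Even ((m - 1) / 2) := ⟨m / 4, by omega⟩
    simp only [PP_four_of_mod_four_eq_one hg hq hχ4g hm hm4 h ha, hπ hk,
      sum_filter_natCast_mul_eq_of_ne_zero _ hmF, MulChar.one_apply (div_ne_zero ha hmF).isUnit,
      quadraticChar_div a hmF, apply_div_eq_apply_pow_three_mul hord a hmF, sub_mul]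
    push_cast
    ring
  · intro ha hne hm4
    have hmF : (m : F) ≠ 0 := hne ∘ hmp.1
    have hk : Even ((m + 1) / 2) := ⟨m / 4 + 1, by omega⟩
    simp only [PP_four_of_mod_four_eq_three hg hq hχ4g hm hm4 h ha, hπ hk,
      sum_filter_natCast_mul_eq_of_ne_zero _ hmF, MulChar.one_apply (div_ne_zero ha hmF).isUnit,
      quadraticChar_div a hmF, sub_mul, sub_re, re_inv_apply_mul_I_pow,
      apply_div_eq_apply_pow_three_mul hord a hmF]
    push_cast
    ring

/-- The values of `P_m(a,4,h)` for a prime `m > 2`, `s = 4` and `q = p ≡ 1 (mod 4)`,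
in terms of `π_4 = (−1)^f·(a_4 + i·b_4)`, the quadratic character `ρ` of `F_p`, the
quartic character `χ_4`, and `R_m`. -/
theorem stmt13 (p m h f : ℕ) [Fact p.Prime] (hm : m.Prime) (hm2 : 2 < m)
    (hp : p = 4 * f + 1)
    (g : (ZMod p)ˣ) (hg : ∀ u : (ZMod p)ˣ, u ∈ Subgroup.zpowers g)
    (hh : h < 4)
    (χ4 : MulChar (ZMod p) ℂ) (hχ4o : orderOf χ4 = 4) (hχ4g : χ4 (g : ZMod p) = Complex.I)
    (a4 b4 : ℤ) (hab : a4 ^ 2 + b4 ^ 2 = (p : ℤ))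
    (ha4 : a4 ≡ -legendreSym p 2 [ZMOD 4])
    (hb4 : (b4 : ZMod p) = (a4 : ZMod p) * (g : ZMod p) ^ ((p - 1) / 4))
    (π4 : ℂ) (hπ4 : π4 = (-1 : ℂ) ^ f * ((a4 : ℂ) + Complex.I * (b4 : ℂ)))
    (a : ZMod p) :
    (a = 0 → m = p →
      (PP (ZMod p) (g : ZMod p) m 4 h a : ℂ) = (1 / 4) * ((p : ℂ) ^ (p - 2) - 1)) ∧
    (a = 0 → m ≠ p →
      (PP (ZMod p) (g : ZMod p) m 4 h a : ℂ) =
        (1 / (4 * (m : ℂ))) * ((p : ℂ) ^ (m - 1) - 1)) ∧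
    (a ≠ 0 → m = p →
      (PP (ZMod p) (g : ZMod p) m 4 h a : ℂ) =
        (1 / (4 * (p : ℂ))) * ((p : ℂ) ^ (p - 1) +
          (-1 : ℂ) ^ h * ((p : ℂ) ^ ((p - 1) / 2) * (quadraticChar (ZMod p) a : ℂ) +
            2 * (p : ℂ) ^ ((p - 1) / 4) *
              ((π4 ^ ((p - 1) / 2) * χ4 a * Complex.I ^ h).re : ℂ)))) ∧
    (a ≠ 0 → m ≠ p → m % 4 = 1 →
      (PP (ZMod p) (g : ZMod p) m 4 h a : ℂ) =
        (1 / (4 * (m : ℂ))) * ((p : ℂ) ^ (m - 1) - 1 +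
          (-1 : ℂ) ^ h * ((quadraticChar (ZMod p) a : ℂ) *
              ((p : ℂ) ^ ((m - 1) / 2) - (quadraticChar (ZMod p) (m : ZMod p) : ℂ)) +
            2 * (((p : ℂ) ^ ((m - 1) / 4) * π4 ^ ((m - 1) / 2) * χ4 a * Complex.I ^ h -
              χ4 ((m : ZMod p) ^ 3 * a) * Complex.I ^ h).re : ℂ)))) ∧
    (a ≠ 0 → m ≠ p → m % 4 = 3 →
      (PP (ZMod p) (g : ZMod p) m 4 h a : ℂ) =
        (1 / (4 * (m : ℂ))) * ((p : ℂ) ^ (m - 1) - 1 +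
          (-1 : ℂ) ^ h * ((quadraticChar (ZMod p) a : ℂ) *
              ((p : ℂ) ^ ((m - 1) / 2) - (quadraticChar (ZMod p) (m : ZMod p) : ℂ)) +
            2 * (((-1 : ℂ) ^ f * (p : ℂ) ^ ((m - 3) / 4) * π4 ^ ((m + 1) / 2) * χ4⁻¹ a *
              Complex.I ^ h -
              χ4 ((m : ZMod p) ^ 3 * a) * Complex.I ^ (3 * h)).re : ℂ)))) := by
  have hq : Fintype.card (ZMod p) = 4 * f + 1 := (ZMod.card p).trans hp
  have hodd : Odd a4 := odd_of_modEq_neg_legendreSym_two (by omega) ha4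
  have hb : (b4 : ZMod p) = a4 * (g : ZMod p) ^ f := by rw [hb4, show (p - 1) / 4 = f by omega]
  have hJ : π4 ^ 2 = jacobiSum χ4 χ4 ^ 2 := by
    rw [hπ4, mul_pow, ← pow_mul, pow_mul', neg_one_sq, one_pow, one_mul,
      add_I_mul_sq_eq_jacobiSum_sq hp hg hχ4g hab hodd hb]
  obtain ⟨h₁, h₂, h₃, -, h₅, h₆⟩ := stmt13_general p m h f hm hm2 hq g hg χ4 hχ4g π4 hJ a
  simp only [ZMod.card] at h₁ h₂ h₃ h₅ h₆
  have hp0 : (p : ℂ) ≠ 0 := Nat.cast_ne_zero.2 (Fact.out : p.Prime).ne_zero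
  refine ⟨fun ha hmp => ?_, h₂, fun ha hmp => h₃ ha hmp (by omega), h₅, h₆⟩
  rw [h₁ ha hmp, div_mul_cancel_right₀ hp0, one_div]

end
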